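/- For every real R > 9, the tail-center integral I_tc := 2∫_{−2}^{2} (R + z^t_1(β)) (z^t_1)'(β) z^t_2(β) / [(R + z^t_1(β))² + (z^t_2(β))²]² dβ satisfies |I_tc| ≤ 24(R+2)/(R−2)⁴, where (z^t_1)' denotes the derivative of z^t_1 (which exists except at the finitely many points β ∈ {−1, 1}, so the integrand is defined almost everywhere). -/

import Mathlib

/-- First component of the tail curve `z^t` (its values outside `[-2,2]` are irrelevant). -/
noncomputable def zt1 (a : ℝ) : ℝ :=
  if a ≤ -1 then a else if a ≤ 1 then a^3 else a

/-- Second component of the tail curve `z^t` (its values outside `[-2,2]` are irrelevant). -/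
noncomputable def zt2 (a : ℝ) : ℝ :=
  if a ≤ -1 then -a - 2 else if a ≤ 1 then a else -a + 2

/-!
On `[-2, 2]` the tail curve has `|z₁| ≤ 2`, `|z₂| ≤ 1` and, off the corners `±1`, `|z₁'| ≤ 3`.
For `R > 2` the point `(R + z₁, z₂)` therefore stays at distance at least `R - 2` from the origin,
so the integrand is at most `3 (R + 2) / (R - 2)⁴` in absolute value. The interval has length `4`
and the integral is doubled.
-/

open Filter MeasureTheory Topology

theorem abs_mul_mul_div_sq_add_sq_sq_le {u v y d D L N : ℝ} (hd : 0 < d) (hdu : d ≤ |u|)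
    (huD : |u| ≤ D) (hv : |v| ≤ L) (hy : |y| ≤ N) :
    |u * v * y / (u ^ 2 + y ^ 2) ^ 2| ≤ D * L * N / d ^ 4 := by
  have hD : 0 ≤ D := (abs_nonneg u).trans huD
  have hL : 0 ≤ L := (abs_nonneg v).trans hv
  have hN : 0 ≤ N := (abs_nonneg y).trans hy
  have hnum : |u * v * y| ≤ D * L * N := by
    rw [abs_mul, abs_mul]
    gcongr
  have hden : d ^ 4 ≤ (u ^ 2 + y ^ 2) ^ 2 :=
    calc d ^ 4 ≤ |u| ^ 4 := by gcongr
      _ = (u ^ 2) ^ 2 := by rw [← sq_abs u]; ring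
      _ ≤ (u ^ 2 + y ^ 2) ^ 2 := by gcongr; exact le_add_of_nonneg_right (sq_nonneg y)
  rw [abs_div, abs_of_nonneg (sq_nonneg (u ^ 2 + y ^ 2))]
  gcongr

theorem zt1_of_one_lt_abs {a : ℝ} (ha : 1 < |a|) : zt1 a = a := by
  rcases lt_abs.mp ha with h | h
  · rw [zt1, if_neg (by linarith), if_neg h.not_ge]
  · rw [zt1, if_pos (by linarith)]

theorem zt1_of_abs_le_one {a : ℝ} (ha : |a| ≤ 1) : zt1 a = a ^ 3 := by
  obtain ⟨hl, hu⟩ := abs_le.mp ha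
  rcases hl.eq_or_lt with rfl | hl
  · norm_num [zt1]
  · rw [zt1, if_neg hl.not_ge, if_pos hu]

theorem abs_zt1_le_abs (a : ℝ) : |zt1 a| ≤ |a| := by
  rcases le_or_gt |a| 1 with ha | ha
  · rw [zt1_of_abs_le_one ha, abs_pow]
    exact pow_le_of_le_one (abs_nonneg a) ha three_ne_zero
  · rw [zt1_of_one_lt_abs ha]

theorem abs_zt2_le_one {a : ℝ} (ha : |a| ≤ 2) : |zt2 a| ≤ 1 := by
  obtain ⟨hl, hu⟩ := abs_le.mp ha
  unfold zt2
  split_ifs <;> rw [abs_le] <;> constructor <;> linarith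

theorem hasDerivAt_zt1_of_one_lt_abs {a : ℝ} (ha : 1 < |a|) : HasDerivAt zt1 1 a := by
  have heq : zt1 =ᶠ[𝓝 a] id :=
    (continuous_abs.continuousAt.eventually_const_lt ha).mono fun _ => zt1_of_one_lt_abs
  exact (hasDerivAt_id a).congr_of_eventuallyEq heq

theorem hasDerivAt_zt1_of_abs_lt_one {a : ℝ} (ha : |a| < 1) :
    HasDerivAt zt1 (3 * a ^ 2) a := by
  have heq : zt1 =ᶠ[𝓝 a] fun x => x ^ 3 :=
    (continuous_abs.continuousAt.eventually_lt_const ha).mono fun _ hx => zt1_of_abs_le_one hx.le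
  exact (hasDerivAt_pow 3 a).congr_of_eventuallyEq heq

theorem abs_deriv_zt1_le_three {a : ℝ} (ha : |a| ≠ 1) : |deriv zt1 a| ≤ 3 := by
  rcases ha.lt_or_gt with ha | ha
  · rw [(hasDerivAt_zt1_of_abs_lt_one ha).deriv, abs_of_nonneg (by positivity)]
    linarith [(sq_lt_one_iff_abs_lt_one a).mpr ha]
  · rw [(hasDerivAt_zt1_of_one_lt_abs ha).deriv]
    norm_num

theorem abs_tail_integrand_le {R b : ℝ} (hR : 2 < R) (hb : |b| ≤ 2) (hb1 : |b| ≠ 1) :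
    |(R + zt1 b) * deriv zt1 b * zt2 b / ((R + zt1 b) ^ 2 + (zt2 b) ^ 2) ^ 2|
      ≤ 3 * (R + 2) / (R - 2) ^ 4 := by
  obtain ⟨hl, hu⟩ := abs_le.mp ((abs_zt1_le_abs b).trans hb)
  have habs : |R + zt1 b| = R + zt1 b := abs_of_pos (by linarith)
  simpa only [mul_one, mul_comm (R + 2) 3] using
    abs_mul_mul_div_sq_add_sq_sq_le (d := R - 2) (D := R + 2) (by linarith) (by linarith)
      (by linarith) (abs_deriv_zt1_le_three hb1) (abs_zt2_le_one hb)

theorem ae_abs_ne (c : ℝ) : ∀ᵐ b : ℝ, |b| ≠ c := by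
  filter_upwards [Measure.ae_ne volume c, Measure.ae_ne volume (-c)] with b hpos hneg hb
  exact (eq_or_eq_neg_of_abs_eq hb).elim hpos hneg

theorem Itc_bound_general (R : ℝ) (hR : 2 < R) :
    |2 * ∫ b in (-2:ℝ)..2,
        (R + zt1 b) * deriv zt1 b * zt2 b / ((R + zt1 b)^2 + (zt2 b)^2)^2|
      ≤ 24 * (R + 2) / (R - 2)^4 := by
  have hbound : ∀ᵐ b : ℝ, b ∈ Set.uIoc (-2 : ℝ) 2 →
      ‖(R + zt1 b) * deriv zt1 b * zt2 b / ((R + zt1 b) ^ 2 + (zt2 b) ^ 2) ^ 2‖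
        ≤ 3 * (R + 2) / (R - 2) ^ 4 := by
    filter_upwards [ae_abs_ne 1] with b hb1 hb
    rw [Set.uIoc_of_le (by norm_num)] at hb
    exact abs_tail_integrand_le hR (abs_le.mpr ⟨hb.1.le, hb.2⟩) hb1
  rw [abs_mul, abs_two]
  calc _ ≤ 2 * (3 * (R + 2) / (R - 2) ^ 4 * |2 - (-2 : ℝ)|) := by
        gcongr
        exact intervalIntegral.norm_integral_le_of_norm_le_const_ae hbound
    _ = 24 * (R + 2) / (R - 2) ^ 4 := by norm_num; ring

/-- For every `R > 9`, the tail-center integral `I_tc` satisfies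
`|I_tc| ≤ 24(R+2)/(R-2)⁴`. -/
theorem Itc_bound (R : ℝ) (hR : 9 < R) :
    |2 * ∫ b in (-2:ℝ)..2,
        (R + zt1 b) * deriv zt1 b * zt2 b / ((R + zt1 b)^2 + (zt2 b)^2)^2|
      ≤ 24 * (R + 2) / (R - 2)^4 :=
  Itc_bound_general R (by linarith)
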